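/- arXiv:1501.04513 — 2 statements merged into one kernel-verified Lean document; each statement's English description precedes it below -/
import Mathlib

section
/- If φ is a Young function and f : ℝ^N → [0, ∞] is Lebesgue measurable, then ‖f‖_φ ≤ ‖f̂‖_φ. -/
open MeasureTheory Filter Set
open scoped ENNReal NNReal Pointwise

noncomputable section

/-- `ℝ^N` with the Euclidean structure and Lebesgue measure. -/
abbrev ES (N : ℕ) := EuclideanSpace ℝ (Fin N)

variable {N : ℕ}

/-- The operation `(f ⊼ g)(x) = sup_y min (f (x - y)) (g y)` for extended-real valued
functions. -/
def supMinE (f g : ES N → EReal) (x : ES N) : EReal := ⨆ y, min (f (x - y)) (g y)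

/-- The operation `(f ⊻ g)(x) = inf_y max (f (x - y)) (g y)` for extended-real valued
functions. -/
def infMaxE (f g : ES N → EReal) (x : ES N) : EReal := ⨅ y, max (f (x - y)) (g y)

/-- The infimal convolution `(f □ g)(x) = inf_y (f (x - y) + g y)`. -/
def infConvE (f g : ES N → EReal) (x : ES N) : EReal := ⨅ y, (f (x - y) + g y)

/-- The operation `(f ⊼ g)(x) = sup_y min (f (x - y)) (g y)` for `[0,∞]`-valued functions. -/
def supMin (f g : ES N → ℝ≥0∞) (x : ES N) : ℝ≥0∞ := ⨆ y, min (f (x - y)) (g y)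

/-- A Young function: a nonconstant, nondecreasing, convex, left-continuous
`φ : [0,∞] → [0,∞]` with `φ 0 = 0`. -/
structure IsYoungFunction (φ : ℝ≥0∞ → ℝ≥0∞) : Prop where
  nonconstant : ∃ x y, φ x ≠ φ y
  map_zero : φ 0 = 0
  mono : Monotone φ
  convex : ∀ ⦃a b x y : ℝ≥0∞⦄, a + b = 1 → φ (a * x + b * y) ≤ a * φ x + b * φ y
  left_continuous : ∀ x, ContinuousWithinAt φ (Set.Iio x) x

/-- The Luxemburg norm `‖h‖_φ = inf {r > 0 | ∫ φ (r⁻¹ |h|) ≤ 1}` (`= ∞` if no such `r`),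
for a nonnegative function `h`. -/
def luxNorm (φ : ℝ≥0∞ → ℝ≥0∞) (h : ES N → ℝ≥0∞) : ℝ≥0∞ :=
  sInf {r : ℝ≥0∞ | 0 < r ∧ ∫⁻ x, φ (r⁻¹ * h x) ≤ 1}

/-- The nonnegative part of an extended real, as an element of `[0,∞]`. -/
def toENN (a : EReal) : ℝ≥0∞ := if a = ⊤ then ⊤ else ENNReal.ofReal a.toReal

/-- The reciprocal `1/a ∈ [0,∞]` of an extended real (intended for `a ≥ 0`), with the
conventions `1/0 = ∞` and `1/∞ = 0`. -/
def eInv (a : EReal) : ℝ≥0∞ := (toENN a)⁻¹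

/-- The enclosing radius of a set `X ⊆ ℝ^N`: the infimum of the radii of closed balls
containing `X` (`0` for `X = ∅`, `∞` if `X` is unbounded). -/
def encRadius (X : Set (ES N)) : ℝ≥0∞ := sInf {r : ℝ≥0∞ | ∃ c : ES N, ∀ x ∈ X, edist x c ≤ r}

/-- The transform `f̂(x) = γ_f^+(|x|)` where `γ_f^+(t) = inf {ξ | ρ_f^+(ξ) ≤ t}` and
`ρ_f^+(ξ)` is the enclosing radius of the upper level set `{f > ξ}`. -/
def hatE (f : ES N → EReal) (x : ES N) : EReal :=
  sInf {ξ : EReal | encRadius {y | ξ < f y} ≤ (‖x‖₊ : ℝ≥0∞)}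

/-- The lower transform `f̌ = -((-f)^)`. -/
def checkE (f : ES N → EReal) (x : ES N) : EReal := - hatE (fun y => - f y) x

/-- The transform `f̂` for `[0,∞]`-valued functions. -/
def hatT (f : ES N → ℝ≥0∞) (x : ES N) : ℝ≥0∞ :=
  sInf {ξ : ℝ≥0∞ | encRadius {y | ξ < f y} ≤ (‖x‖₊ : ℝ≥0∞)}

/-- The lower transform `f̌(x) = γ_f^-(|x|)`, `γ_f^-(t) = sup {ξ | ρ({f < ξ}) ≤ t}`,
for `[0,∞]`-valued functions. -/
def checkT (f : ES N → ℝ≥0∞) (x : ES N) : ℝ≥0∞ :=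
  sSup {ξ : ℝ≥0∞ | encRadius {y | f y < ξ} ≤ (‖x‖₊ : ℝ≥0∞)}

/-- The `L^p` "norm" (`p ∈ [1,∞]`, essential supremum when `p = ∞`) of a `[0,∞]`-valued
function. -/
def pNorm (p : ℝ≥0∞) (h : ES N → ℝ≥0∞) : ℝ≥0∞ :=
  if p = ∞ then essSup h volume else (∫⁻ x, h x ^ p.toReal) ^ (1 / p.toReal)

/-!
If the upper level set `{η < f}` has enclosing radius `R`, then `η ≤ f̂` on the ball of radius `R`
about the origin, and this ball has at least the measure of `{η < f}`. Letting `η` decrease to `ξ`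
gives `|{ξ < f}| ≤ |{ξ < f̂}|` for every `ξ`. Such a comparison of level sets survives composition
with a nondecreasing left-continuous function, whose strict upper level sets are open half-lines,
and by the layer-cake formula it implies the comparison of integrals.
-/

section StochasticOrder

variable {Ω α β : Type*} [MeasurableSpace Ω] {μ : Measure Ω}

/-- The usual stochastic order: `f` is dominated by `g` if every strict upper level set of `f` has
at most the measure of the corresponding level set of `g`. The functions need not be measurable, in
which case `μ` is read as an outer measure. -/
def StochLE [LT α] (μ : Measure Ω) (f g : Ω → α) : Prop :=
  ∀ t, μ {x | t < f x} ≤ μ {x | t < g x}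

theorem StochLE.of_measure_lt_le_measure_le [LinearOrder α] [DenselyOrdered α] [TopologicalSpace α]
    [OrderTopology α] [FirstCountableTopology α] {f g : Ω → α}
    (h : ∀ t, μ {x | t < f x} ≤ μ {x | t ≤ g x}) : StochLE μ f g := by
  intro t
  rcases {x | t < f x}.eq_empty_or_nonempty with hempty | ⟨x₀, hx₀⟩
  · simp [hempty]
  obtain ⟨u, hanti, hu, hlim⟩ := exists_seq_strictAnti_tendsto' hx₀
  have hunion : {x | t < f x} = ⋃ n, {x | u n < f x} := by
    ext x
    simp only [mem_ofPred_eq, mem_iUnion]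
    exact ⟨fun hx => (hlim.eventually_lt_const hx).exists, fun ⟨n, hn⟩ => (hu n).1.trans hn⟩
  have hmono : Monotone fun n => {x | u n < f x} := fun _ _ hmn _ hx =>
    (hanti.antitone hmn).trans_lt hx
  rw [hunion, hmono.measure_iUnion]
  exact iSup_le fun n => (h (u n)).trans (measure_mono fun _ hx => (hu n).1.trans_le hx)

theorem preimage_Ioi_eq_univ_or_exists_eq_Ioi [CompleteLinearOrder α] [TopologicalSpace α]
    [OrderTopology α] [LinearOrder β] [TopologicalSpace β] [OrderClosedTopology β] {φ : α → β}
    (hφ : Monotone φ) (hφc : ∀ x, ContinuousWithinAt φ (Iio x) x) (t : β) :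
    φ ⁻¹' Ioi t = univ ∨ ∃ a, φ ⁻¹' Ioi t = Ioi a := by
  set A := {s | φ s ≤ t}
  rcases A.eq_empty_or_nonempty with hA | hA
  · exact Or.inl (eq_univ_of_forall fun s => lt_of_not_ge fun hs => hA.subset hs)
  have hsup : φ (sSup A) ≤ t := by
    have hcont : ContinuousWithinAt φ A (sSup A) :=
      (continuousWithinAt_Iio_iff_Iic.1 (hφc (sSup A))).mono fun _ hs => le_sSup hs
    have : (nhdsWithin (sSup A) A).NeBot := mem_closure_iff_nhdsWithin_neBot.1 (sSup_mem_closure hA)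
    exact le_of_tendsto hcont self_mem_nhdsWithin
  refine Or.inr ⟨sSup A, Set.ext fun s => ⟨fun hs => ?_, fun hs => ?_⟩⟩
  · exact lt_of_not_ge fun hle => (hs.trans_le ((hφ hle).trans hsup)).false
  · exact lt_of_not_ge fun hle => (hs.trans_le (le_sSup hle)).false

theorem StochLE.comp_left [CompleteLinearOrder α] [TopologicalSpace α] [OrderTopology α]
    [LinearOrder β] [TopologicalSpace β] [OrderClosedTopology β] {f g : Ω → α} {φ : α → β}
    (h : StochLE μ f g) (hφ : Monotone φ) (hφc : ∀ x, ContinuousWithinAt φ (Iio x) x) :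
    StochLE μ (φ ∘ f) (φ ∘ g) := by
  intro t
  change μ (f ⁻¹' (φ ⁻¹' Ioi t)) ≤ μ (g ⁻¹' (φ ⁻¹' Ioi t))
  rcases preimage_Ioi_eq_univ_or_exists_eq_Ioi hφ hφc t with huniv | ⟨a, ha⟩
  · simp [huniv]
  · simpa only [ha] using! h a

theorem lintegral_eq_lintegral_meas_ofReal_lt {f : Ω → ℝ≥0∞} (hf : AEMeasurable f μ) :
    ∫⁻ x, f x ∂μ = ∫⁻ t in Ioi (0 : ℝ), μ {x | ENNReal.ofReal t < f x} := by
  by_cases hfin : μ {x | f x = ∞} = 0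
  · have hne : ∀ᵐ x ∂μ, f x ≠ ∞ := ae_iff.2 (by simpa using! hfin)
    calc ∫⁻ x, f x ∂μ = ∫⁻ x, ENNReal.ofReal (f x).toReal ∂μ :=
          lintegral_congr_ae (hne.mono fun _ hx => (ENNReal.ofReal_toReal hx).symm)
      _ = ∫⁻ t in Ioi (0 : ℝ), μ {x | t < (f x).toReal} :=
          lintegral_eq_lintegral_meas_lt μ (Eventually.of_forall fun _ => ENNReal.toReal_nonneg)
            hf.ennreal_toReal
      _ = ∫⁻ t in Ioi (0 : ℝ), μ {x | ENNReal.ofReal t < f x} :=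
          setLIntegral_congr_fun measurableSet_Ioi fun t ht => measure_congr <|
            hne.mono fun _ hx => propext (ENNReal.ofReal_lt_iff_lt_toReal (le_of_lt ht) hx).symm
  · rw [lintegral_eq_top_of_measure_eq_top_ne_zero hf hfin, eq_comm, eq_top_iff]
    calc ∞ = ∫⁻ _ in Ioi (0 : ℝ), μ {x | f x = ∞} := by simp [ENNReal.mul_top hfin]
      _ ≤ ∫⁻ t in Ioi (0 : ℝ), μ {x | ENNReal.ofReal t < f x} :=
          lintegral_mono fun _ => measure_mono fun _ hx => ENNReal.ofReal_lt_top.trans_eq hx.symm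

theorem StochLE.lintegral_le {f g : Ω → ℝ≥0∞} (h : StochLE μ f g) (hg : AEMeasurable g μ) :
    ∫⁻ x, f x ∂μ ≤ ∫⁻ x, g x ∂μ := by
  -- The integral of a nonmeasurable `f` is attained by a measurable minorant.
  obtain ⟨k, hk, hkf, hint⟩ := exists_measurable_le_lintegral_eq μ f
  rw [hint, lintegral_eq_lintegral_meas_ofReal_lt hk.aemeasurable,
    lintegral_eq_lintegral_meas_ofReal_lt hg]
  exact lintegral_mono fun t => (measure_mono fun x hx => hx.trans_le (hkf x)).trans (h _)

end StochasticOrder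

section Balls

variable {E : Type*} [NormedAddCommGroup E] [NormedSpace ℝ E] [FiniteDimensional ℝ E]
  [MeasurableSpace E] [BorelSpace E] (μ : Measure E) [μ.IsAddHaarMeasure]

theorem tendsto_addHaar_closedBall_nhdsGT {R : ℝ} (hR : 0 ≤ R) (c : E) :
    Tendsto (fun r => μ (Metric.closedBall c r)) (nhdsWithin R (Ioi R))
      (nhds (μ (Metric.closedBall c R))) := by
  have hformula : EqOn (fun r => μ (Metric.closedBall c r))
      (fun r => ENNReal.ofReal (r ^ Module.finrank ℝ E) * μ (Metric.ball 0 1)) (Ici 0) :=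
    fun _ hr => Measure.addHaar_closedBall μ c hr
  have hcont : Continuous fun r : ℝ =>
      ENNReal.ofReal (r ^ Module.finrank ℝ E) * μ (Metric.ball 0 1) :=
    (ENNReal.continuous_mul_const measure_ball_lt_top.ne).comp
      (ENNReal.continuous_ofReal.comp (continuous_pow _))
  exact (hcont.continuousOn.congr hformula R hR).mono_left
    (nhdsWithin_mono R fun _ hr => hR.trans (le_of_lt hr))

theorem addHaar_le_addHaar_eball_of_forall_subset_closedEBall [Nontrivial E] {X : Set E} {R : ℝ≥0∞}
    (h : ∀ r > R, ∃ c, X ⊆ Metric.closedEBall c r) (x : E) : μ X ≤ μ (Metric.eball x R) := by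
  induction R with
  | top => simp
  | coe R =>
    rw [Metric.eball_coe, ← Measure.addHaar_closedBall_eq_addHaar_ball]
    refine ge_of_tendsto (tendsto_addHaar_closedBall_nhdsGT μ R.coe_nonneg x)
      (eventually_mem_nhdsWithin.mono fun r hr => ?_)
    obtain ⟨c, hc⟩ := h (ENNReal.ofReal r)
      ((ENNReal.lt_ofReal_iff_toReal_lt ENNReal.coe_ne_top).2 hr)
    rw [Metric.closedEBall_ofReal (R.coe_nonneg.trans (le_of_lt hr))] at hc
    calc μ X ≤ μ (Metric.closedBall c r) := measure_mono hc
      _ = μ (Metric.closedBall x r) := by simp only [Measure.addHaar_closedBall_center]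

end Balls

theorem encRadius_mono {X Y : Set (ES N)} (h : X ⊆ Y) : encRadius X ≤ encRadius Y :=
  sInf_le_sInf fun _ ⟨c, hc⟩ => ⟨c, fun x hx => hc x (h hx)⟩

theorem exists_subset_closedEBall_of_encRadius_lt {X : Set (ES N)} {r : ℝ≥0∞}
    (h : encRadius X < r) : ∃ c, X ⊆ Metric.closedEBall c r := by
  obtain ⟨s, ⟨c, hc⟩, hs⟩ := sInf_lt_iff.1 h
  exact ⟨c, fun x hx => (hc x hx).trans hs.le⟩

theorem volume_le_volume_eball_encRadius (hN : 0 < N) (X : Set (ES N)) :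
    volume X ≤ volume (Metric.eball (0 : ES N) (encRadius X)) := by
  have : Nonempty (Fin N) := ⟨⟨0, hN⟩⟩
  exact addHaar_le_addHaar_eball_of_forall_subset_closedEBall volume
    (fun _ => exists_subset_closedEBall_of_encRadius_lt) 0

theorem eball_encRadius_subset_le_hatT (f : ES N → ℝ≥0∞) (η : ℝ≥0∞) :
    Metric.eball 0 (encRadius {y | η < f y}) ⊆ {x | η ≤ hatT f x} := by
  intro x hx
  change η ≤ hatT f x
  refine le_sInf fun ξ hξ => ?_
  by_contra! hlt
  have hradius : encRadius {y | η < f y} ≤ ‖x‖ₑ :=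
    (encRadius_mono fun y hy => hlt.trans hy).trans hξ
  exact (hradius.trans_lt (mem_eball_zero_iff.1 hx)).false

theorem stochLE_hatT (hN : 0 < N) (f : ES N → ℝ≥0∞) : StochLE volume f (hatT f) :=
  .of_measure_lt_le_measure_le fun η => (volume_le_volume_eball_encRadius hN _).trans
    (measure_mono (eball_encRadius_subset_le_hatT f η))

theorem measurable_hatT (f : ES N → ℝ≥0∞) : Measurable (hatT f) := by
  have hanti : Antitone fun t : ℝ≥0 => sInf {ξ : ℝ≥0∞ | encRadius {y | ξ < f y} ≤ t} :=
    fun s t hst => sInf_le_sInf fun ξ hξ => le_trans hξ (ENNReal.coe_le_coe.2 hst)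
  exact hanti.measurable.comp measurable_nnnorm

theorem StochLE.luxNorm_le {φ : ℝ≥0∞ → ℝ≥0∞} {f g : ES N → ℝ≥0∞} (h : StochLE volume f g)
    (hφ : Monotone φ) (hφc : ∀ x, ContinuousWithinAt φ (Iio x) x) (hg : AEMeasurable g) :
    luxNorm φ f ≤ luxNorm φ g := by
  refine sInf_le_sInf fun r ⟨hr, hint⟩ => ⟨hr, le_trans ?_ hint⟩
  have hcont : Continuous fun s => r⁻¹ * s :=
    ENNReal.continuous_const_mul (ENNReal.inv_ne_top.2 hr.ne')
  have hscaled : StochLE volume (fun x => r⁻¹ * f x) (fun x => r⁻¹ * g x) :=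
    h.comp_left (φ := fun s => r⁻¹ * s) (fun _ _ hst => mul_le_mul_right hst _)
      fun _ => hcont.continuousWithinAt
  exact (hscaled.comp_left hφ hφc).lintegral_le
    (hφ.measurable.comp_aemeasurable (hg.const_mul _))

theorem luxNorm_le_luxNorm_hatT_general (hN : 0 < N) {φ : ℝ≥0∞ → ℝ≥0∞} (hφ : Monotone φ)
    (hφc : ∀ x, ContinuousWithinAt φ (Iio x) x) (f : ES N → ℝ≥0∞) :
    luxNorm φ f ≤ luxNorm φ (hatT f) :=
  (stochLE_hatT hN f).luxNorm_le hφ hφc (measurable_hatT f).aemeasurable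

theorem luxNorm_le_luxNorm_hatT {N : ℕ} (hN : 0 < N)
    (φ : ℝ≥0∞ → ℝ≥0∞) (hφ : IsYoungFunction φ)
    (f : ES N → ℝ≥0∞) (hf : AEMeasurable f (volume : Measure (ES N))) :
    luxNorm φ f ≤ luxNorm φ (hatT f) :=
  luxNorm_le_luxNorm_hatT_general hN hφ.mono hφ.left_continuous f

end
end

section
/- Let f : ℝ^N → (−∞, ∞] with m_f := inf f > −∞, and suppose there are constants c > 0 and α > 0 such that f(x) ≥ h(x) := c|x|^α for all |x| large enough. Let z < m_f and let B be an open ball centered at the origin such that f ≥ h and h ≥ 2z outside B. Then for every Young function φ: ‖(f̌ − z)⁻¹‖_φ ≤ 2 ‖h⁻¹ · χ_{ℝ^N∖B}‖_φ + (m_f − z)⁻¹ ‖χ_B‖_φ. In particular, if h⁻¹ restricted to ℝ^N∖B lies in the Orlicz space L_φ, then (f̌ − z)⁻¹ ∈ L_φ. -/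
/-!
The function `f̌` is bounded below by `inf f` everywhere and, because the sublevel set
`{f < h x}` lies in the ball of radius `|x|` when `h` is radially nondecreasing, by `h` outside `B`.
Since `h - z ≥ h / 2` as soon as `h ≥ 2z`, this gives the pointwise bound
`(f̌ - z)⁻¹ ≤ 2 h⁻¹ χ_{Bᶜ} + (inf f - z)⁻¹ χ_B`, and the inequality of norms follows because
`‖·‖_φ` is monotone, homogeneous and subadditive.

For finiteness one needs `‖χ_B‖_φ < ∞`, which can fail only if `φ = ∞` on `(0, ∞]`. Such a `φ`
gives infinite norm to every function that is nonzero throughout a set of positive measure,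
in particular to `h⁻¹ χ_{Bᶜ}`.
-/

open MeasureTheory Filter Set
open scoped ENNReal NNReal Pointwise

noncomputable section

variable {N : ℕ}

lemma eInv_antitone : Antitone eInv := fun _ _ h =>
  ENNReal.inv_le_inv.2 (EReal.toENNReal_le_toENNReal h)

lemma eInv_coe (a : ℝ) : eInv a = (ENNReal.ofReal a)⁻¹ :=
  congrArg _ (EReal.real_coe_toENNReal a)

lemma eInv_ne_top {a : EReal} (ha : 0 < a) : eInv a ≠ ∞ :=
  ENNReal.inv_ne_top.2 (EReal.toENNReal_ne_zero_iff.2 ha)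

lemma eInv_coe_sub_le {a : ℝ≥0} {z : ℝ} (h : 2 * z ≤ a) :
    eInv (((a : ℝ) : EReal) - (z : EReal)) ≤ 2 * (a : ℝ≥0∞)⁻¹ :=
  calc eInv (((a : ℝ) : EReal) - (z : EReal))
      = (ENNReal.ofReal (a - z))⁻¹ := by rw [← EReal.coe_sub, eInv_coe]
    _ ≤ (ENNReal.ofReal (a / 2))⁻¹ :=
        ENNReal.inv_le_inv.2 (ENNReal.ofReal_le_ofReal (by linarith))
    _ = 2 * (a : ℝ≥0∞)⁻¹ := by
        rw [ENNReal.ofReal_div_of_pos two_pos, ENNReal.ofReal_ofNat, ENNReal.ofReal_coe_nnreal,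
          ENNReal.inv_div (by simp) (by simp), div_eq_mul_inv]

lemma encRadius_le {X : Set (ES N)} {a : ES N} {r : ℝ≥0∞} (h : ∀ x ∈ X, edist x a ≤ r) :
    encRadius X ≤ r :=
  sInf_le ⟨a, h⟩

section LowerTransform

variable {f : ES N → EReal} {x : ES N} {η : EReal}

lemma le_checkE_of_encRadius_le (h : encRadius {y | f y < η} ≤ (‖x‖₊ : ℝ≥0∞)) :
    η ≤ checkE f x := by
  rw [checkE, EReal.le_neg]
  exact sInf_le (by simpa only [mem_ofPred_eq, EReal.neg_lt_neg_iff] using h)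

lemma le_checkE_of_forall_norm_le (h : ∀ y, ‖x‖ ≤ ‖y‖ → η ≤ f y) : η ≤ checkE f x := by
  refine le_checkE_of_encRadius_le (encRadius_le (a := 0) fun y hy => ?_)
  rw [edist_zero_right, enorm_eq_nnnorm, ENNReal.coe_le_coe]
  by_contra! hxy
  exact (h y hxy.le).not_gt hy

lemma iInf_le_checkE (f : ES N → EReal) (x : ES N) : ⨅ y, f y ≤ checkE f x :=
  le_checkE_of_forall_norm_le fun y _ => iInf_le f y

end LowerTransform

lemma eInv_checkE_sub_le {f : ES N → EReal} {h : ES N → ℝ≥0} {B : Set (ES N)} {z : ℝ}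
    (hf : ∀ x ∉ B, ∀ y, ‖x‖ ≤ ‖y‖ → ((h x : ℝ) : EReal) ≤ f y)
    (hz : ∀ x ∉ B, 2 * z ≤ h x) (x : ES N) :
    eInv (checkE f x - (z : EReal)) ≤
      2 * Bᶜ.indicator (fun x => (h x : ℝ≥0∞)⁻¹) x +
        eInv ((⨅ x, f x) - (z : EReal)) * B.indicator (fun _ => 1) x := by
  by_cases hx : x ∈ B
  · calc eInv (checkE f x - (z : EReal))
        ≤ eInv ((⨅ x, f x) - (z : EReal)) :=
          eInv_antitone (EReal.sub_le_sub (iInf_le_checkE f x) le_rfl)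
      _ = _ := by simp [hx]
  · calc eInv (checkE f x - (z : EReal))
        ≤ eInv (((h x : ℝ) : EReal) - (z : EReal)) :=
          eInv_antitone (EReal.sub_le_sub (le_checkE_of_forall_norm_le (hf x hx)) le_rfl)
      _ ≤ 2 * (h x : ℝ≥0∞)⁻¹ := eInv_coe_sub_le (hz x hx)
      _ = _ := by simp [hx]

section YoungFunction

variable {φ : ℝ≥0∞ → ℝ≥0∞}

lemma IsYoungFunction.map_mul_le (hφ : IsYoungFunction φ) {a : ℝ≥0∞} (ha : a ≤ 1) (x : ℝ≥0∞) :
    φ (a * x) ≤ a * φ x := by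
  simpa [hφ.map_zero] using hφ.convex (x := x) (y := 0) (add_tsub_cancel_of_le ha)

lemma IsYoungFunction.map_inv_add_mul_le (hφ : IsYoungFunction φ) {r s : ℝ≥0∞}
    (hr : r ≠ 0) (hr' : r ≠ ∞) (hs : s ≠ 0) (hs' : s ≠ ∞) (x y : ℝ≥0∞) :
    φ ((r + s)⁻¹ * (x + y)) ≤
      (r + s)⁻¹ * (r * φ (r⁻¹ * x) + s * φ (s⁻¹ * y)) := by
  have hweights : (r + s)⁻¹ * r + (r + s)⁻¹ * s = 1 := by
    rw [← mul_add, ENNReal.inv_mul_cancel (by simp [hr]) (by simp [hr', hs'])]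
  simpa only [mul_assoc, mul_add, ENNReal.mul_inv_cancel_left hr hr',
    ENNReal.mul_inv_cancel_left hs hs'] using
    hφ.convex hweights (x := r⁻¹ * x) (y := s⁻¹ * y)

lemma IsYoungFunction.exists_map_mul_le_one (hφ : IsYoungFunction φ) {t v : ℝ≥0∞} (ht : t ≠ 0)
    (hφt : φ t ≠ ∞) (hv : v ≠ ∞) : ∃ u, u ≠ 0 ∧ u ≠ ∞ ∧ φ u * v ≤ 1 := by
  set M : ℝ≥0∞ := φ t * v + 1
  have hM : M ≠ ∞ := by simp [M, ENNReal.mul_ne_top hφt hv]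
  have hM1 : 1 ≤ M := le_add_self
  have hM0 : M ≠ 0 := (zero_lt_one.trans_le hM1).ne'
  refine ⟨M⁻¹ * min t 1, by simp [hM, ht], by simp [ENNReal.mul_eq_top, hM0], ?_⟩
  calc φ (M⁻¹ * min t 1) * v
      ≤ M⁻¹ * φ t * v := by
        gcongr
        exact (hφ.map_mul_le (ENNReal.inv_le_one.2 hM1) _).trans
          (by gcongr; exact hφ.mono (min_le_left t 1))
    _ = M⁻¹ * (φ t * v) := mul_assoc _ _ _
    _ ≤ M⁻¹ * M := by gcongr; exact le_self_add
    _ = 1 := ENNReal.inv_mul_cancel hM0 hM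

end YoungFunction

section Luxemburg

variable {φ : ℝ≥0∞ → ℝ≥0∞} {g h : ES N → ℝ≥0∞}

lemma luxNorm_le {r : ℝ≥0∞} (hr : 0 < r) (hg : ∫⁻ x, φ (r⁻¹ * g x) ≤ 1) : luxNorm φ g ≤ r :=
  sInf_le ⟨hr, hg⟩

lemma luxNorm_mono (hφ : Monotone φ) (hgh : ∀ x, g x ≤ h x) : luxNorm φ g ≤ luxNorm φ h :=
  sInf_le_sInf fun _ hr => ⟨hr.1, (lintegral_mono fun x => hφ (by gcongr; exact hgh x)).trans hr.2⟩

lemma luxNorm_zero (hφ : φ 0 = 0) : luxNorm φ (fun _ : ES N => 0) = 0 :=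
  nonpos_iff_eq_zero.1 <| le_of_forall_gt_imp_ge_of_dense fun _ hr => luxNorm_le hr (by simp [hφ])

lemma luxNorm_const_mul_le (hφ : φ 0 = 0) (g : ES N → ℝ≥0∞) {a : ℝ≥0∞} (ha : a ≠ ∞) :
    luxNorm φ (fun x => a * g x) ≤ a * luxNorm φ g := by
  rcases eq_or_ne a 0 with rfl | ha0
  · simp [luxNorm_zero hφ]
  rw [luxNorm.eq_def φ g, sInf_eq_iInf', ENNReal.mul_iInf_of_ne ha0 ha]
  refine le_iInf fun ⟨r, hr0, hr⟩ => luxNorm_le (ENNReal.mul_pos ha0 hr0.ne') ?_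
  have hcancel (x : ES N) : (a * r)⁻¹ * (a * g x) = r⁻¹ * g x := by
    rw [ENNReal.mul_inv (.inl ha0) (.inl ha), mul_comm a⁻¹, mul_assoc,
      ENNReal.inv_mul_cancel_left ha0 ha]
  simpa only [hcancel] using hr

lemma lintegral_inv_add_mul_le_one (hφ : IsYoungFunction φ) (hh : AEMeasurable h)
    {r s : ℝ≥0∞} (hr : r ≠ 0) (hr' : r ≠ ∞) (hs : s ≠ 0) (hs' : s ≠ ∞)
    (hgr : ∫⁻ x, φ (r⁻¹ * g x) ≤ 1) (hhs : ∫⁻ x, φ (s⁻¹ * h x) ≤ 1) :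
    ∫⁻ x, φ ((r + s)⁻¹ * (g x + h x)) ≤ 1 := by
  have hφh : AEMeasurable fun x => φ (s⁻¹ * h x) :=
    hφ.mono.measurable.comp_aemeasurable (hh.const_mul _)
  calc ∫⁻ x, φ ((r + s)⁻¹ * (g x + h x))
      ≤ ∫⁻ x, (r + s)⁻¹ * (r * φ (r⁻¹ * g x) + s * φ (s⁻¹ * h x)) :=
        lintegral_mono fun x => hφ.map_inv_add_mul_le hr hr' hs hs' _ _
    _ = (r + s)⁻¹ * (r * (∫⁻ x, φ (r⁻¹ * g x)) + s * ∫⁻ x, φ (s⁻¹ * h x)) := by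
        rw [lintegral_const_mul' _ _ (by simp [hr]), lintegral_add_right' _ (hφh.const_mul _),
          lintegral_const_mul' _ _ hr', lintegral_const_mul' _ _ hs']
    _ ≤ (r + s)⁻¹ * (r * 1 + s * 1) := by gcongr
    _ = 1 := by
        rw [mul_one, mul_one, ENNReal.inv_mul_cancel (by simp [hr]) (by simp [hr', hs'])]

lemma luxNorm_add_le (hφ : IsYoungFunction φ) (g : ES N → ℝ≥0∞) (hh : AEMeasurable h) :
    luxNorm φ (fun x => g x + h x) ≤ luxNorm φ g + luxNorm φ h := by
  rw [luxNorm.eq_def φ g, luxNorm.eq_def φ h, ENNReal.sInf_add]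
  refine le_iInf₂ fun r ⟨hr, hgr⟩ => ?_
  rw [ENNReal.add_sInf]
  refine le_iInf₂ fun s ⟨hs, hhs⟩ => ?_
  rcases eq_or_ne r ∞ with rfl | hr'
  · simp
  rcases eq_or_ne s ∞ with rfl | hs'
  · simp
  exact luxNorm_le (hr.trans_le le_self_add)
    (lintegral_inv_add_mul_le_one hφ hh hr.ne' hr' hs.ne' hs' hgr hhs)

lemma luxNorm_indicator_one_le (hφ : φ 0 = 0) {s : Set (ES N)} {u : ℝ≥0∞} (hu : u ≠ ∞)
    (hs : φ u * volume s ≤ 1) : luxNorm φ (s.indicator fun _ => 1) ≤ u⁻¹ := by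
  refine luxNorm_le (ENNReal.inv_pos.2 hu) ?_
  have hcomp (x : ES N) :
      φ (u⁻¹⁻¹ * s.indicator (fun _ => 1) x) = s.indicator (fun _ => φ u) x := by
    by_cases hx : x ∈ s <;> simp [hx, hφ]
  simpa only [hcomp] using (lintegral_indicator_const_le s (φ u)).trans hs

lemma luxNorm_indicator_one_ne_top (hφ : IsYoungFunction φ) {t : ℝ≥0∞} (ht : t ≠ 0)
    (hφt : φ t ≠ ∞) {s : Set (ES N)} (hs : volume s ≠ ∞) :
    luxNorm φ (s.indicator fun _ => 1) ≠ ∞ := by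
  obtain ⟨u, hu0, hu, hus⟩ := hφ.exists_map_mul_le_one ht hφt hs
  exact ne_top_of_le_ne_top (ENNReal.inv_ne_top.2 hu0)
    (luxNorm_indicator_one_le hφ.map_zero hu hus)

lemma exists_map_ne_top_of_luxNorm_ne_top {s : Set (ES N)} (hs : MeasurableSet s)
    (hs0 : volume s ≠ 0) (hg : ∀ x ∈ s, g x ≠ 0) (hfin : luxNorm φ g ≠ ∞) :
    ∃ t, t ≠ 0 ∧ φ t ≠ ∞ := by
  obtain ⟨r, ⟨-, hr⟩, hr'⟩ := sInf_lt_iff.1 hfin.lt_top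
  by_contra! hφ
  have htop : ∫⁻ x in s, φ (r⁻¹ * g x) = ∞ := by
    rw [setLIntegral_congr_fun hs fun x hx =>
        hφ _ (mul_ne_zero (ENNReal.inv_ne_zero.2 hr'.ne) (hg x hx)),
      setLIntegral_const, ENNReal.top_mul hs0]
  have hle : ∞ ≤ (1 : ℝ≥0∞) := htop ▸ (setLIntegral_le_lintegral s _).trans hr
  exact hle.not_gt ENNReal.one_lt_top

end Luxemburg

lemma measure_compl_eq_top {Ω : Type*} [MeasurableSpace Ω] {μ : Measure Ω} {s : Set Ω}
    (hμ : μ univ = ∞) (hs : μ s ≠ ∞) : μ sᶜ = ∞ :=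
  (ENNReal.add_eq_top.1 (top_unique (hμ ▸ measure_univ_le_add_compl s))).resolve_left hs

lemma luxNorm_eInv_checkE_sub_le_add {f : ES N → EReal} {h : ES N → ℝ≥0} {B : Set (ES N)} {z : ℝ}
    (hB : MeasurableSet B) (hz : (z : EReal) < ⨅ x, f x)
    (hf : ∀ x ∉ B, ∀ y, ‖x‖ ≤ ‖y‖ → ((h x : ℝ) : EReal) ≤ f y) (h2z : ∀ x ∉ B, 2 * z ≤ h x)
    {φ : ℝ≥0∞ → ℝ≥0∞} (hφ : IsYoungFunction φ) :
    luxNorm φ (fun x => eInv (checkE f x - (z : EReal))) ≤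
      2 * luxNorm φ (Bᶜ.indicator fun x => (h x : ℝ≥0∞)⁻¹) +
        eInv ((⨅ x, f x) - (z : EReal)) * luxNorm φ (B.indicator fun _ => 1) := by
  set H : ES N → ℝ≥0∞ := Bᶜ.indicator fun x => (h x : ℝ≥0∞)⁻¹
  set χ : ES N → ℝ≥0∞ := B.indicator fun _ => 1
  set a : ℝ≥0∞ := eInv ((⨅ x, f x) - (z : EReal))
  have ha : a ≠ ∞ := eInv_ne_top (EReal.sub_pos.2 hz)
  have hχ : Measurable χ := measurable_const.indicator hB
  calc luxNorm φ (fun x => eInv (checkE f x - (z : EReal)))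
      ≤ luxNorm φ (fun x => 2 * H x + a * χ x) := luxNorm_mono hφ.mono (eInv_checkE_sub_le hf h2z)
    _ ≤ luxNorm φ (fun x => 2 * H x) + luxNorm φ (fun x => a * χ x) :=
        luxNorm_add_le hφ _ (hχ.const_mul a).aemeasurable
    _ ≤ 2 * luxNorm φ H + a * luxNorm φ χ :=
        add_le_add (luxNorm_const_mul_le hφ.map_zero H ENNReal.ofNat_ne_top)
          (luxNorm_const_mul_le hφ.map_zero χ ha)

lemma luxNorm_indicator_one_ne_top_of_compl (hN : 0 < N) {φ : ℝ≥0∞ → ℝ≥0∞}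
    (hφ : IsYoungFunction φ) {B : Set (ES N)} (hB : MeasurableSet B) (hBfin : volume B ≠ ∞)
    {g : ES N → ℝ≥0∞} (hg : ∀ x ∉ B, g x ≠ 0) (hfin : luxNorm φ (Bᶜ.indicator g) ≠ ∞) :
    luxNorm φ (B.indicator fun _ => 1) ≠ ∞ := by
  have : NeZero N := ⟨hN.ne'⟩
  have hcompl : volume Bᶜ = ∞ :=
    measure_compl_eq_top (measure_univ_of_isAddLeftInvariant _) hBfin
  obtain ⟨t, ht, hφt⟩ := exists_map_ne_top_of_luxNorm_ne_top hB.compl (by simp [hcompl])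
    (fun x hx => by simpa only [indicator_of_mem hx] using hg x hx) hfin
  exact luxNorm_indicator_one_ne_top hφ ht hφt hBfin

theorem luxNorm_inv_checkE_sub_le_general (hN : 0 < N) {f : ES N → EReal} {h : ES N → ℝ≥0}
    {z ρB : ℝ} (hz : (z : EReal) < ⨅ x, f x)
    (hmono : ∀ x ∉ Metric.ball (0 : ES N) ρB, ∀ y, ‖x‖ ≤ ‖y‖ → h x ≤ h y)
    (hf : ∀ x ∉ Metric.ball (0 : ES N) ρB, ((h x : ℝ) : EReal) ≤ f x)
    (h2z : ∀ x ∉ Metric.ball (0 : ES N) ρB, 2 * z ≤ h x)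
    {φ : ℝ≥0∞ → ℝ≥0∞} (hφ : IsYoungFunction φ) :
    luxNorm φ (fun x => eInv (checkE f x - (z : EReal))) ≤
      2 * luxNorm φ ((Metric.ball (0 : ES N) ρB)ᶜ.indicator fun x => (h x : ℝ≥0∞)⁻¹) +
        eInv ((⨅ x, f x) - (z : EReal)) *
          luxNorm φ ((Metric.ball (0 : ES N) ρB).indicator fun _ => 1) ∧
    (luxNorm φ ((Metric.ball (0 : ES N) ρB)ᶜ.indicator fun x => (h x : ℝ≥0∞)⁻¹) ≠ ∞ →
      luxNorm φ (fun x => eInv (checkE f x - (z : EReal))) ≠ ∞) := by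
  set B := Metric.ball (0 : ES N) ρB
  have hfB (x) (hx : x ∉ B) (y) (hxy : ‖x‖ ≤ ‖y‖) : ((h x : ℝ) : EReal) ≤ f y := by
    have hy : y ∉ B := fun hy =>
      hx (mem_ball_zero_iff.2 (hxy.trans_lt (mem_ball_zero_iff.1 hy)))
    exact (EReal.coe_le_coe_iff.2 (hmono x hx y hxy)).trans (hf y hy)
  have hbound := luxNorm_eInv_checkE_sub_le_add measurableSet_ball hz hfB h2z hφ
  refine ⟨hbound, fun hfin => ne_top_of_le_ne_top ?_ hbound⟩
  have hχ : luxNorm φ (B.indicator fun _ => 1) ≠ ∞ :=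
    luxNorm_indicator_one_ne_top_of_compl hN hφ measurableSet_ball measure_ball_lt_top.ne
      (fun x _ => by simp) hfin
  exact ENNReal.add_ne_top.2 ⟨ENNReal.mul_ne_top ENNReal.ofNat_ne_top hfin,
    ENNReal.mul_ne_top (eInv_ne_top (EReal.sub_pos.2 hz)) hχ⟩

theorem luxNorm_inv_checkE_sub_le {N : ℕ} (hN : 0 < N)
    (f : ES N → EReal) (hf' : ∀ x, f x ≠ ⊥) (hmf : (⊥ : EReal) < ⨅ x, f x)
    (c α : ℝ) (hc : 0 < c) (hα : 0 < α)
    (hfar : ∃ R : ℝ, ∀ x : ES N, R ≤ ‖x‖ → ((c * ‖x‖ ^ α : ℝ) : EReal) ≤ f x)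
    (z : ℝ) (hz : (z : EReal) < ⨅ x, f x)
    (ρB : ℝ)
    (hB : ∀ x : ES N, x ∉ Metric.ball (0 : ES N) ρB →
      ((c * ‖x‖ ^ α : ℝ) : EReal) ≤ f x ∧ ((2 * z : ℝ) : EReal) ≤ ((c * ‖x‖ ^ α : ℝ) : EReal))
    (φ : ℝ≥0∞ → ℝ≥0∞) (hφ : IsYoungFunction φ) :
    luxNorm φ (fun x => eInv (checkE f x - (z : EReal))) ≤
      2 * luxNorm φ ((Metric.ball (0 : ES N) ρB)ᶜ.indicator
          (fun x => (ENNReal.ofReal (c * ‖x‖ ^ α))⁻¹)) +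
        eInv ((⨅ x, f x) - (z : EReal)) *
          luxNorm φ ((Metric.ball (0 : ES N) ρB).indicator (fun _ => (1 : ℝ≥0∞))) ∧
    (luxNorm φ ((Metric.ball (0 : ES N) ρB)ᶜ.indicator
        (fun x => (ENNReal.ofReal (c * ‖x‖ ^ α))⁻¹)) ≠ ∞ →
      luxNorm φ (fun x => eInv (checkE f x - (z : EReal))) ≠ ∞) := by
  have hnonneg (x : ES N) : 0 ≤ c * ‖x‖ ^ α := by positivity
  exact luxNorm_inv_checkE_sub_le_general hN hz (h := fun x => (c * ‖x‖ ^ α).toNNReal)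
    (fun x _ y hxy => Real.toNNReal_mono (by gcongr))
    (fun x hx => by simpa only [Real.coe_toNNReal _ (hnonneg x)] using (hB x hx).1)
    (fun x hx => by
      simpa only [Real.coe_toNNReal _ (hnonneg x)] using EReal.coe_le_coe_iff.1 (hB x hx).2) hφ

end
end
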